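/- Assume Λ₀ ≥ 0, and let u(x) = e^{i k·x} p(x) be a nonzero Bloch solution of Pu = 0 whose quasimomentum k satisfies Im k ∈ -G. Then u is, up to a nonzero complex multiplicative constant, a positive Bloch solution: there exists c ∈ ℂ \ {0} such that c·u(x) > 0 for all x ∈ ℝⁿ. -/

import Mathlib

/-!
Let `η = -Im k`, and let `Ξ` be the zero set of `Λ`. Consider the exponents `η` for which there is
a positive supersolution `e^s` of `P` with `s(x) - η · x` periodic (`IsSuperExponent`). Every
`ξ ∈ Ξ` is one, through its positive Bloch solution. The set of such `η` is convex: a weighted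
geometric mean of supersolutions is again a supersolution, because `e^{-s} P e^s` is concave in
`s`, the quadratic part `-a(∇s, ∇s)` being concave (`Cs_concave`). Hence it contains the convex hull
of `Ξ`.

Given a Bloch solution `u` with `-Im k = η`, the function `|u| e^{-s}` is periodic, so it attains
its maximum `M > 0` at some `x₀`. Choose a unimodular `θ` with `θ u(x₀) = |u(x₀)|` and put
`h = Re(θ u) e^{-s}`. Then `h ≤ M` and `h(x₀) = M`. Conjugating `P` by `e^s` (`Pop_mul_exp`) gives
`L h = -h · (e^{-s} P e^s)`, where `L` is elliptic without zeroth-order term, so `L(M - h) ≥ 0`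
wherever `h > 0`. The strong minimum principle (`strong_minimum`, proved by comparison with a
Gaussian barrier) yields `h = M` everywhere. Since `|θ u| ≤ M e^s = Re(θ u)`, the function `θ u`
is real and equals `M e^s > 0`.
-/

set_option autoImplicit false

open MeasureTheory Filter

noncomputable section

/-- The partial derivative of a function on `ℝⁿ` in the `i`-th coordinate direction. -/
def pd {n : ℕ} {E : Type*} [NormedAddCommGroup E] [NormedSpace ℝ E]
    (i : Fin n) (u : (Fin n → ℝ) → E) (x : Fin n → ℝ) : E :=
  fderiv ℝ u x (Pi.single i 1)

/-- `ℤⁿ`-periodicity of a function on `ℝⁿ`. -/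
def ZPeriodic {n : ℕ} {α : Type*} (f : (Fin n → ℝ) → α) : Prop :=
  ∀ (x : Fin n → ℝ) (γ : Fin n → ℤ), f (x + fun i => (γ i : ℝ)) = f x

/-- The dot product `ξ · x` of two real vectors. -/
def dotR {n : ℕ} (ξ x : Fin n → ℝ) : ℝ := ∑ i, ξ i * x i

/-- The pairing `k · x` of a complex vector `k` with a real vector `x`. -/
def dotCR {n : ℕ} (k : Fin n → ℂ) (x : Fin n → ℝ) : ℂ := ∑ i, k i * (x i : ℂ)

/-- The second-order operator
`Pu(x) = -∑ a_{ij}(x) ∂_i∂_j u(x) + ∑ b_i(x) ∂_i u(x) + c(x) u(x)`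
acting on real-valued functions. -/
def Pop {n : ℕ} (a : (Fin n → ℝ) → Fin n → Fin n → ℝ) (b : (Fin n → ℝ) → Fin n → ℝ)
    (c : (Fin n → ℝ) → ℝ) (u : (Fin n → ℝ) → ℝ) (x : Fin n → ℝ) : ℝ :=
  -(∑ i, ∑ j, a x i j * pd i (pd j u) x) + ∑ i, b x i * pd i u x + c x * u x

/-- The same operator `P` acting on complex-valued functions. -/
def PopC {n : ℕ} (a : (Fin n → ℝ) → Fin n → Fin n → ℝ) (b : (Fin n → ℝ) → Fin n → ℝ)
    (c : (Fin n → ℝ) → ℝ) (u : (Fin n → ℝ) → ℂ) (x : Fin n → ℝ) : ℂ :=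
  -(∑ i, ∑ j, (a x i j : ℂ) * pd i (pd j u) x) + ∑ i, (b x i : ℂ) * pd i u x + (c x : ℂ) * u x

/-- The formal adjoint `P*v = -∑ ∂_i∂_j(a_{ij} v) - ∑ ∂_i(b_i v) + c v`
acting on real-valued functions. -/
def Padj {n : ℕ} (a : (Fin n → ℝ) → Fin n → Fin n → ℝ) (b : (Fin n → ℝ) → Fin n → ℝ)
    (c : (Fin n → ℝ) → ℝ) (v : (Fin n → ℝ) → ℝ) (x : Fin n → ℝ) : ℝ :=
  -(∑ i, ∑ j, pd i (pd j fun z => a z i j * v z) x) - (∑ i, pd i (fun y => b y i * v y) x)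
    + c x * v x

/-- The formal adjoint `P*` acting on complex-valued functions. -/
def PadjC {n : ℕ} (a : (Fin n → ℝ) → Fin n → Fin n → ℝ) (b : (Fin n → ℝ) → Fin n → ℝ)
    (c : (Fin n → ℝ) → ℝ) (v : (Fin n → ℝ) → ℂ) (x : Fin n → ℝ) : ℂ :=
  -(∑ i, ∑ j, pd i (pd j fun z => (a z i j : ℂ) * v z) x)
    - (∑ i, pd i (fun y => (b y i : ℂ) * v y) x) + (c x : ℂ) * v x

/-- The standing assumptions on the operator `P`: the coefficients are real-valued,
`ℤⁿ`-periodic, `a_{ij} ∈ C²`, `b_i ∈ C¹`, `c` continuous, and the uniform ellipticity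
condition `∑ a_{ij}(x) ζ_i ζ_j ≥ a₀ |ζ|²` holds. -/
def IsPeriodicElliptic {n : ℕ} (a : (Fin n → ℝ) → Fin n → Fin n → ℝ)
    (b : (Fin n → ℝ) → Fin n → ℝ) (c : (Fin n → ℝ) → ℝ) : Prop :=
  (∀ i j, ContDiff ℝ 2 fun x => a x i j) ∧ (∀ i, ContDiff ℝ 1 fun x => b x i) ∧
    Continuous c ∧ ZPeriodic a ∧ ZPeriodic b ∧ ZPeriodic c ∧
    ∃ a₀ : ℝ, 0 < a₀ ∧
      ∀ x ζ : Fin n → ℝ, a₀ * ∑ i, ζ i ^ 2 ≤ ∑ i, ∑ j, a x i j * ζ i * ζ j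

/-- `lam` is a real number such that `Pu = lam·u` admits a positive solution of the form
`u(x) = e^{ξ·x} p(x)` with `p` positive, `C²` and `ℤⁿ`-periodic. -/
def IsPrincipalEV {n : ℕ} (a : (Fin n → ℝ) → Fin n → Fin n → ℝ)
    (b : (Fin n → ℝ) → Fin n → ℝ) (c : (Fin n → ℝ) → ℝ) (ξ : Fin n → ℝ) (lam : ℝ) : Prop :=
  ∃ p : (Fin n → ℝ) → ℝ, ContDiff ℝ 2 p ∧ (∀ x, 0 < p x) ∧ ZPeriodic p ∧
    ∀ x, Pop a b c (fun y => Real.exp (dotR ξ y) * p y) x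
      = lam * (Real.exp (dotR ξ x) * p x)

/-- The generalized principal eigenvalue
`Λ₀ = sup {λ ∈ ℝ : ∃ u > 0 with Pu = λu in ℝⁿ}`. -/
def gpev {n : ℕ} (a : (Fin n → ℝ) → Fin n → Fin n → ℝ) (b : (Fin n → ℝ) → Fin n → ℝ)
    (c : (Fin n → ℝ) → ℝ) : ℝ :=
  sSup {lam : ℝ | ∃ u : (Fin n → ℝ) → ℝ, ContDiff ℝ 2 u ∧ (∀ x, 0 < u x) ∧
    ∀ x, Pop a b c u x = lam * u x}

/-- `k` belongs to the Fermi surface `F_P`: the equation `Pu = 0` admits a nonzero Bloch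
solution `u(x) = e^{i k·x} p(x)` with `p` `ℤⁿ`-periodic. -/
def InFermi {n : ℕ} (a : (Fin n → ℝ) → Fin n → Fin n → ℝ) (b : (Fin n → ℝ) → Fin n → ℝ)
    (c : (Fin n → ℝ) → ℝ) (k : Fin n → ℂ) : Prop :=
  ∃ p : (Fin n → ℝ) → ℂ, ContDiff ℝ 2 p ∧ ZPeriodic p ∧ (∃ x, p x ≠ 0) ∧
    ∀ x, PopC a b c (fun y => Complex.exp (Complex.I * dotCR k y) * p y) x = 0

/-- `(k, lam)` belongs to the Bloch variety `B_P`: the equation `Pu = lam·u` admits a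
nonzero Bloch solution with quasimomentum `k`. -/
def InBloch {n : ℕ} (a : (Fin n → ℝ) → Fin n → Fin n → ℝ) (b : (Fin n → ℝ) → Fin n → ℝ)
    (c : (Fin n → ℝ) → ℝ) (k : Fin n → ℂ) (lam : ℂ) : Prop :=
  ∃ p : (Fin n → ℝ) → ℂ, ContDiff ℝ 2 p ∧ ZPeriodic p ∧ (∃ x, p x ≠ 0) ∧
    ∀ x, PopC a b c (fun y => Complex.exp (Complex.I * dotCR k y) * p y) x
      = lam * (Complex.exp (Complex.I * dotCR k x) * p x)

/-- `k` belongs to the Fermi surface `F_{P*}` of the formal adjoint. -/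
def InFermiAdj {n : ℕ} (a : (Fin n → ℝ) → Fin n → Fin n → ℝ) (b : (Fin n → ℝ) → Fin n → ℝ)
    (c : (Fin n → ℝ) → ℝ) (k : Fin n → ℂ) : Prop :=
  ∃ p : (Fin n → ℝ) → ℂ, ContDiff ℝ 2 p ∧ ZPeriodic p ∧ (∃ x, p x ≠ 0) ∧
    ∀ x, PadjC a b c (fun y => Complex.exp (Complex.I * dotCR k y) * p y) x = 0

/-- `(k, lam)` belongs to the Bloch variety `B_{P*}` of the formal adjoint. -/
def InBlochAdj {n : ℕ} (a : (Fin n → ℝ) → Fin n → Fin n → ℝ) (b : (Fin n → ℝ) → Fin n → ℝ)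
    (c : (Fin n → ℝ) → ℝ) (k : Fin n → ℂ) (lam : ℂ) : Prop :=
  ∃ p : (Fin n → ℝ) → ℂ, ContDiff ℝ 2 p ∧ ZPeriodic p ∧ (∃ x, p x ≠ 0) ∧
    ∀ x, PadjC a b c (fun y => Complex.exp (Complex.I * dotCR k y) * p y) x
      = lam * (Complex.exp (Complex.I * dotCR k x) * p x)

/-- The Euclidean norm of an integer vector `γ ∈ ℤⁿ`. -/
def enormZ {n : ℕ} (γ : Fin n → ℤ) : ℝ := Real.sqrt (∑ i, ((γ i : ℝ)) ^ 2)

/-- The support (indicator) function `h_G(x) = sup_{ξ ∈ G} ξ · x` of a set `G ⊆ ℝⁿ`. -/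
def suppFn {n : ℕ} (G : Set (Fin n → ℝ)) (x : Fin n → ℝ) : ℝ :=
  sSup ((fun ξ => dotR ξ x) '' G)

/-- The closed tube `𝒯_G = {k ∈ ℂⁿ : Im k ∈ G}` over a set `G ⊆ ℝⁿ`. -/
def tubeOver {n : ℕ} (G : Set (Fin n → ℝ)) : Set (Fin n → ℂ) :=
  {k | (fun i => (k i).im) ∈ G}
/-! ### Calculus of partial derivatives and conjugation by an exponential -/

section PD
variable {n : ℕ} {E : Type*} [NormedAddCommGroup E] [NormedSpace ℝ E]

lemma ContDiff.pd_one {f : (Fin n → ℝ) → E} (hf : ContDiff ℝ 2 f) (i : Fin n) :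
    ContDiff ℝ 1 (pd i f) :=
  (hf.fderiv_right (m := 1) (by norm_num)).clm_apply contDiff_const

lemma ContDiff.diffAt {f : (Fin n → ℝ) → E} {m : WithTop ℕ∞} (hf : ContDiff ℝ m f) (hm : 1 ≤ m)
    (x : Fin n → ℝ) : DifferentiableAt ℝ f x :=
  (hf.differentiable (by rintro rfl; simp at hm)) x

lemma pd_add {f g : (Fin n → ℝ) → E} (hf : ContDiff ℝ 1 f) (hg : ContDiff ℝ 1 g) (i : Fin n) :
    pd i (fun x => f x + g x) = fun x => pd i f x + pd i g x := by
  funext x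
  simp [pd, fderiv_fun_add (hf.diffAt le_rfl x) (hg.diffAt le_rfl x)]

lemma pd_const (i : Fin n) (v : E) : pd i (fun _ => v) = fun _ => 0 := by
  funext x; simp [pd]

lemma pd_mul {f g : (Fin n → ℝ) → ℝ} (hf : ContDiff ℝ 1 f) (hg : ContDiff ℝ 1 g) (i : Fin n) :
    pd i (fun x => f x * g x) = fun x => pd i f x * g x + f x * pd i g x := by
  funext x
  simp [pd, fderiv_fun_mul (hf.diffAt le_rfl x) (hg.diffAt le_rfl x)]; ring

lemma pd_const_mul {f : (Fin n → ℝ) → ℝ} (hf : ContDiff ℝ 1 f) (t : ℝ) (i : Fin n) :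
    pd i (fun x => t * f x) = fun x => t * pd i f x := by
  rw [pd_mul contDiff_const hf, pd_const]; simp

lemma pd_exp {f : (Fin n → ℝ) → ℝ} (hf : ContDiff ℝ 1 f) (i : Fin n) :
    pd i (fun x => Real.exp (f x)) = fun x => pd i f x * Real.exp (f x) := by
  funext x
  simp [pd, fderiv_exp (hf.diffAt le_rfl x)]; ring

lemma pd_clm {F : Type*} [NormedAddCommGroup F] [NormedSpace ℝ F] (l : E →L[ℝ] F)
    {f : (Fin n → ℝ) → E} (hf : ContDiff ℝ 1 f) (i : Fin n) :
    pd i (fun x => l (f x)) = fun x => l (pd i f x) := by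
  funext x
  have := l.hasFDerivAt.comp x (hf.diffAt le_rfl x).hasFDerivAt
  have h2 : fderiv ℝ (fun x => l (f x)) x = l.comp (fderiv ℝ f x) := this.fderiv
  simp [pd, h2]

/-- Iterated partial derivatives are the entries of the second Fréchet derivative. -/
lemma pd_pd_eq {f : (Fin n → ℝ) → E} (hf : ContDiff ℝ 2 f) (i j : Fin n) (x : Fin n → ℝ) :
    pd i (pd j f) x = fderiv ℝ (fderiv ℝ f) x (Pi.single i 1) (Pi.single j 1) := by
  have h : DifferentiableAt ℝ (fderiv ℝ f) x :=
    (hf.fderiv_right (m := 1) (by norm_num)).diffAt le_rfl x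
  have := fderiv_clm_apply h (differentiableAt_const (Pi.single j (1:ℝ)))
  simp only [pd]
  change fderiv ℝ (fun x => fderiv ℝ f x (Pi.single j 1)) x _ = _
  rw [this]; simp

/-- The function `e^{-s} P(e^s)`, expanded in terms of the derivatives of `s`. -/
def Cs (a : (Fin n → ℝ) → Fin n → Fin n → ℝ) (b : (Fin n → ℝ) → Fin n → ℝ)
    (c : (Fin n → ℝ) → ℝ) (s : (Fin n → ℝ) → ℝ) (x : Fin n → ℝ) : ℝ :=
  -(∑ i, ∑ j, a x i j * (pd i (pd j s) x + pd i s x * pd j s x)) + ∑ i, b x i * pd i s x + c x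

/-- The first-order coefficients of the conjugated operator `h ↦ e^{-s} P(h e^s)`. As `a` need
not be symmetric, the contribution of the second-order part involves `a + aᵀ`. -/
def drift (a : (Fin n → ℝ) → Fin n → Fin n → ℝ) (b : (Fin n → ℝ) → Fin n → ℝ)
    (s : (Fin n → ℝ) → ℝ) (x : Fin n → ℝ) (i : Fin n) : ℝ :=
  b x i - ∑ j, (a x i j + a x j i) * pd j s x

/-- Conjugation of `P` by `e^s`: the zeroth-order coefficient becomes `e^{-s} P(e^s)`. -/
lemma Pop_mul_exp (a : (Fin n → ℝ) → Fin n → Fin n → ℝ) (b : (Fin n → ℝ) → Fin n → ℝ)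
    (c : (Fin n → ℝ) → ℝ) {h s : (Fin n → ℝ) → ℝ} (hh : ContDiff ℝ 2 h) (hs : ContDiff ℝ 2 s)
    (x : Fin n → ℝ) :
    Pop a b c (fun y => h y * Real.exp (s y)) x =
      Real.exp (s x) * (Pop a (drift a b s) (fun _ => 0) h x + h x * Cs a b c s x) := by
  have h1 : ContDiff ℝ 1 h := hh.of_le (by norm_num)
  have s1 : ContDiff ℝ 1 s := hs.of_le (by norm_num)
  have e1 : ContDiff ℝ 1 fun x => Real.exp (s x) := s1.exp
  have hd : ∀ i, pd i (fun y => h y * Real.exp (s y)) =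
      fun x => (pd i h x + h x * pd i s x) * Real.exp (s x) := by
    intro i
    rw [pd_mul h1 e1, pd_exp s1]; funext x; ring
  have hdd : ∀ i j, pd i (pd j (fun y => h y * Real.exp (s y))) x =
      (pd i (pd j h) x + pd i h x * pd j s x + pd j h x * pd i s x
        + h x * (pd i (pd j s) x + pd i s x * pd j s x)) * Real.exp (s x) := by
    intro i j
    rw [hd, pd_mul ((hh.pd_one j).add (h1.mul (hs.pd_one j))) e1, pd_exp s1,
      pd_add (hh.pd_one j) (h1.mul (hs.pd_one j)), pd_mul h1 (hs.pd_one j)]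
    ring
  have key : ∑ i, (∑ j, (a x i j + a x j i) * pd j s x) * pd i h x =
      ∑ i, ∑ j, a x i j * (pd i h x * pd j s x + pd j h x * pd i s x) := by
    simp only [mul_add, add_mul, Finset.sum_add_distrib, Finset.sum_mul]
    congr 1
    · exact Finset.sum_congr rfl fun i _ => Finset.sum_congr rfl fun j _ => by ring
    · rw [Finset.sum_comm]
      exact Finset.sum_congr rfl fun i _ => Finset.sum_congr rfl fun j _ => by ring
  have e2 : ∑ i, ∑ j, a x i j * pd i (pd j (fun y => h y * Real.exp (s y))) x =
      Real.exp (s x) * (∑ i, ∑ j, a x i j * pd i (pd j h) x +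
        ∑ i, ∑ j, a x i j * (pd i h x * pd j s x + pd j h x * pd i s x) +
        h x * ∑ i, ∑ j, a x i j * (pd i (pd j s) x + pd i s x * pd j s x)) := by
    simp only [hdd, Finset.mul_sum, ← Finset.sum_add_distrib]
    exact Finset.sum_congr rfl fun i _ => Finset.sum_congr rfl fun j _ => by ring
  have e3 : ∑ i, b x i * pd i (fun y => h y * Real.exp (s y)) x =
      Real.exp (s x) * (∑ i, b x i * pd i h x + h x * ∑ i, b x i * pd i s x) := by
    simp only [hd, Finset.mul_sum, ← Finset.sum_add_distrib]
    exact Finset.sum_congr rfl fun i _ => by ring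
  have e4 : ∑ i, drift a b s x i * pd i h x = ∑ i, b x i * pd i h x -
      ∑ i, ∑ j, a x i j * (pd i h x * pd j s x + pd j h x * pd i s x) := by
    simp only [drift, sub_mul, Finset.sum_sub_distrib, key]
  simp only [Pop, Cs]
  rw [e2, e3, e4]; ring

lemma Pop_exp (a : (Fin n → ℝ) → Fin n → Fin n → ℝ) (b : (Fin n → ℝ) → Fin n → ℝ)
    (c : (Fin n → ℝ) → ℝ) {s : (Fin n → ℝ) → ℝ} (hs : ContDiff ℝ 2 s) (x : Fin n → ℝ) :
    Pop a b c (fun y => Real.exp (s y)) x = Real.exp (s x) * Cs a b c s x := by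
  have := Pop_mul_exp a b c (contDiff_const (c := (1:ℝ))) hs x
  simpa [Pop, pd_const] using this

/-- Concavity of `s ↦ e^{-s} P(e^s)`. Its defect from affinity is `t r a(∇(s - s'), ∇(s - s'))`. -/
lemma Cs_concave {a : (Fin n → ℝ) → Fin n → Fin n → ℝ} (b : (Fin n → ℝ) → Fin n → ℝ)
    (c : (Fin n → ℝ) → ℝ) {s s' : (Fin n → ℝ) → ℝ} (hs : ContDiff ℝ 2 s) (hs' : ContDiff ℝ 2 s')
    {t r : ℝ} (ht : 0 ≤ t) (hr : 0 ≤ r) (htr : t + r = 1) (x : Fin n → ℝ)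
    (ha : ∀ ζ : Fin n → ℝ, 0 ≤ ∑ i, ∑ j, a x i j * ζ i * ζ j) :
    t * Cs a b c s x + r * Cs a b c s' x ≤ Cs a b c (fun y => t * s y + r * s' y) x := by
  have s1 : ContDiff ℝ 1 s := hs.of_le (by norm_num)
  have s1' : ContDiff ℝ 1 s' := hs'.of_le (by norm_num)
  have hd : ∀ i, pd i (fun y => t * s y + r * s' y) = fun x => t * pd i s x + r * pd i s' x := by
    intro i
    rw [pd_add (contDiff_const.mul s1) (contDiff_const.mul s1'), pd_const_mul s1, pd_const_mul s1']
  have hdd : ∀ i j, pd i (pd j (fun y => t * s y + r * s' y)) x =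
      t * pd i (pd j s) x + r * pd i (pd j s') x := by
    intro i j
    have q := hs.pd_one j
    have q' := hs'.pd_one j
    rw [hd, pd_add (contDiff_const.mul q) (contDiff_const.mul q'), pd_const_mul q, pd_const_mul q']
  have e := ha fun i => pd i s x - pd i s' x
  have key : Cs a b c (fun y => t * s y + r * s' y) x =
      t * Cs a b c s x + r * Cs a b c s' x + t * r *
        ∑ i, ∑ j, a x i j * (pd i s x - pd i s' x) * (pd j s x - pd j s' x) := by
    have k1 : ∑ i, ∑ j, a x i j * (pd i (pd j (fun y => t * s y + r * s' y)) x +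
          pd i (fun y => t * s y + r * s' y) x * pd j (fun y => t * s y + r * s' y) x) =
        t * (∑ i, ∑ j, a x i j * (pd i (pd j s) x + pd i s x * pd j s x)) +
        r * (∑ i, ∑ j, a x i j * (pd i (pd j s') x + pd i s' x * pd j s' x)) - t * r *
        ∑ i, ∑ j, a x i j * (pd i s x - pd i s' x) * (pd j s x - pd j s' x) := by
      simp only [hdd]
      simp only [hd, Finset.mul_sum, ← Finset.sum_add_distrib, ← Finset.sum_sub_distrib]
      obtain rfl : r = 1 - t := by linarith
      exact Finset.sum_congr rfl fun i _ => Finset.sum_congr rfl fun j _ => by ring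
    have k2 : ∑ i, b x i * pd i (fun y => t * s y + r * s' y) x =
        t * ∑ i, b x i * pd i s x + r * ∑ i, b x i * pd i s' x := by
      simp only [hd, Finset.mul_sum, ← Finset.sum_add_distrib]
      exact Finset.sum_congr rfl fun i _ => by ring
    simp only [Cs]
    rw [k1, k2]
    obtain rfl : r = 1 - t := by linarith
    ring
  rw [key]
  nlinarith [mul_nonneg (mul_nonneg ht hr) e]
end PD

/-! ### Minima and barriers for second-order operators -/

section MaxPrinciple
variable {n : ℕ}

/-- Necessity of the second-order condition at a minimum. If the second derivative along `ζ` were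
negative, the restriction to that line would also have a local maximum, hence be constant. -/
lemma second_deriv_nonneg_of_isLocalMin {f : (Fin n → ℝ) → ℝ} (hf : ContDiff ℝ 2 f)
    {x : Fin n → ℝ} (hx : IsLocalMin f x) (ζ : Fin n → ℝ) :
    0 ≤ fderiv ℝ (fderiv ℝ f) x ζ ζ := by
  by_contra hneg
  push Not at hneg
  have hl : ∀ t : ℝ, HasDerivAt (fun t : ℝ => x + t • ζ) ζ t := fun t => by
    simpa using ((hasDerivAt_id t).smul_const ζ).const_add x
  have hd : Differentiable ℝ f := hf.differentiable (by norm_num)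
  have hd2 : Differentiable ℝ (fderiv ℝ f) :=
    (hf.fderiv_right (m := 1) (by norm_num)).differentiable (by norm_num)
  have h1 : ∀ t : ℝ, HasDerivAt (fun t : ℝ => f (x + t • ζ)) (fderiv ℝ f (x + t • ζ) ζ) t :=
    fun t => (hd (x + t • ζ)).hasFDerivAt.comp_hasDerivAt t (hl t)
  have h1' : deriv (fun t : ℝ => f (x + t • ζ)) = fun t => fderiv ℝ f (x + t • ζ) ζ :=
    funext fun t => (h1 t).deriv
  have h2 : HasDerivAt (fun t : ℝ => fderiv ℝ f (x + t • ζ) ζ) (fderiv ℝ (fderiv ℝ f) x ζ ζ) 0 := by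
    have := (hd2 (x + (0:ℝ) • ζ)).hasFDerivAt.comp_hasDerivAt 0 (hl 0)
    have := this.clm_apply (hasDerivAt_const (0:ℝ) ζ)
    simpa using this
  have hz : fderiv ℝ f x = 0 := hx.fderiv_eq_zero
  have hcont : ContinuousAt (fun t : ℝ => f (x + t • ζ)) 0 := (h1 0).continuousAt
  have hmax : IsLocalMax (fun t : ℝ => f (x + t • ζ)) 0 := by
    apply isLocalMax_of_deriv_deriv_neg _ _ hcont
    · rw [h1', h2.deriv]; exact hneg
    · rw [h1']; simp [hz]
  have hmin : ∀ᶠ t : ℝ in nhds 0, f x ≤ f (x + t • ζ) := by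
    have : Tendsto (fun t : ℝ => x + t • ζ) (nhds 0) (nhds x) := by
      have := (hl 0).continuousAt.tendsto
      simpa using this
    exact this.eventually hx
  have hconst : (fun t : ℝ => f (x + t • ζ)) =ᶠ[nhds 0] fun _ => f x := by
    filter_upwards [hmin, hmax] with t h1 h2
    simp only [zero_smul, add_zero] at h2
    exact le_antisymm h2 h1
  have := hconst.deriv.deriv_eq
  rw [h1', h2.deriv] at this
  simp at this
  linarith

/-- The Hessian at a minimum is a sum of rank-one matrices `v vᵀ`, on each of which the contraction
with `A` is a value of the quadratic form of `A`. -/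
lemma second_order_sum_nonneg {f : (Fin n → ℝ) → ℝ} (hf : ContDiff ℝ 2 f)
    {x : Fin n → ℝ} (hx : IsLocalMin f x) {A : Fin n → Fin n → ℝ}
    (hA : ∀ ζ : Fin n → ℝ, 0 ≤ ∑ i, ∑ j, A i j * ζ i * ζ j) :
    0 ≤ ∑ i, ∑ j, A i j * pd i (pd j f) x := by
  have hs : IsSymmSndFDerivAt ℝ f x := hf.contDiffAt.isSymmSndFDerivAt (by simp)
  set H : Matrix (Fin n) (Fin n) ℝ := fun i j => pd i (pd j f) x with hH
  have hquad : ∀ ζ : Fin n → ℝ, star ζ ⬝ᵥ (H.mulVec ζ) = fderiv ℝ (fderiv ℝ f) x ζ ζ := by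
    intro ζ
    have hz : ζ = ∑ i, ζ i • (Pi.single i (1:ℝ) : Fin n → ℝ) := by
      ext j; simp [Finset.sum_apply, Pi.single_apply]
    conv_rhs => rw [hz]
    simp only [map_sum, map_smul, sum_apply, smul_apply,
      smul_eq_mul, dotProduct, Matrix.mulVec, hH, pd_pd_eq hf, Finset.mul_sum]
    simp only [Pi.star_apply, star_trivial]
    refine Finset.sum_congr rfl fun i _ => Finset.sum_congr rfl fun j _ => ?_
    rw [hs (Pi.single i 1) (Pi.single j 1)]
    ring
  have hpos : H.PosSemidef := by
    rw [Matrix.posSemidef_iff_dotProduct_mulVec]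
    refine ⟨?_, fun ζ => ?_⟩
    · ext i j
      simp only [hH, pd_pd_eq hf]
      exact hs _ _
    · rw [hquad]; exact second_deriv_nonneg_of_isLocalMin hf hx ζ
  obtain ⟨m, v, hv⟩ := Matrix.posSemidef_iff_eq_sum_vecMulVec.mp hpos
  have hv' : ∀ i j, pd i (pd j f) x = ∑ k, v k i * v k j := by
    intro i j
    change H i j = _
    rw [hv]; simp [Matrix.sum_apply, Matrix.vecMulVec_apply]
  simp only [hv', Finset.mul_sum]
  have : ∑ i, ∑ j, ∑ k, A i j * (v k i * v k j) = ∑ k, ∑ i, ∑ j, A i j * v k i * v k j := by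
    rw [Finset.sum_comm (s := (Finset.univ : Finset (Fin m)))]
    refine Finset.sum_congr rfl fun i _ => ?_
    rw [Finset.sum_comm]
    exact Finset.sum_congr rfl fun i _ => Finset.sum_congr rfl fun j _ => by ring
  rw [this]
  exact Finset.sum_nonneg fun k _ => hA (v k)

lemma Pop_nonpos_of_isLocalMin {f : (Fin n → ℝ) → ℝ} (hf : ContDiff ℝ 2 f)
    {x : Fin n → ℝ} (hx : IsLocalMin f x) {a : (Fin n → ℝ) → Fin n → Fin n → ℝ}
    (hA : ∀ ζ : Fin n → ℝ, 0 ≤ ∑ i, ∑ j, a x i j * ζ i * ζ j) (β : (Fin n → ℝ) → Fin n → ℝ) :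
    Pop a β (fun _ => 0) f x ≤ 0 := by
  have h := second_order_sum_nonneg hf hx hA
  have hz : fderiv ℝ f x = 0 := hx.fderiv_eq_zero
  have hz' : ∀ i, pd i f x = 0 := fun i => by simp [pd, hz]
  simp only [Pop, hz']
  simp; linarith

/-- Squared Euclidean distance. The metric of `Fin n → ℝ` is the sup distance, whose balls are not
smooth enough for the barrier argument. -/
def sqd (z x : Fin n → ℝ) : ℝ := ∑ i, (x i - z i) ^ 2

lemma sqd_contDiff (z : Fin n → ℝ) {m : WithTop ℕ∞} : ContDiff ℝ m (sqd z) := by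
  unfold sqd
  exact ContDiff.sum fun i _ => ((contDiff_apply ℝ ℝ i).sub contDiff_const).pow 2

lemma pd_sqd (z : Fin n → ℝ) (i : Fin n) : pd i (sqd z) = fun x => 2 * (x i - z i) := by
  funext x
  have h : HasFDerivAt (sqd z) (∑ j, (2 * (x j - z j)) •
      (ContinuousLinearMap.proj j : (Fin n → ℝ) →L[ℝ] ℝ)) x := by
    unfold sqd
    refine HasFDerivAt.fun_sum fun j _ => ?_
    have h0 : HasFDerivAt (fun x : Fin n → ℝ => x j - z j)
        (ContinuousLinearMap.proj j : (Fin n → ℝ) →L[ℝ] ℝ) x :=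
      (hasFDerivAt_apply (𝕜 := ℝ) j x).sub_const (z j)
    simpa using h0.pow 2
  simp [pd, h.fderiv, Pi.single_apply]

lemma pd_coord (z : Fin n → ℝ) (i j : Fin n) :
    pd i (fun x => 2 * (x j - z j)) = fun _ => if i = j then 2 else 0 := by
  funext x
  have h0 : HasFDerivAt (fun x : Fin n → ℝ => 2 * (x j - z j))
      ((2:ℝ) • (ContinuousLinearMap.proj j : (Fin n → ℝ) →L[ℝ] ℝ)) x :=
    ((hasFDerivAt_apply (𝕜 := ℝ) j x).sub_const (z j)).const_mul 2
  simp [pd, h0.fderiv, Pi.single_apply, eq_comm]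

/-- The operator on a Gaussian `e^{-α|y - z|²}`. By ellipticity the term in `α²` is negative away from
`z`, so it dominates for large `α`. -/
lemma Pop_barrier (a : (Fin n → ℝ) → Fin n → Fin n → ℝ) (β : (Fin n → ℝ) → Fin n → ℝ)
    (z : Fin n → ℝ) (α : ℝ) (x : Fin n → ℝ) :
    Pop a β (fun _ => 0) (fun y => Real.exp (-α * sqd z y)) x =
      Real.exp (-α * sqd z x) * (-(4 * α ^ 2) * (∑ i, ∑ j, a x i j * (x i - z i) * (x j - z j))
        + 2 * α * ∑ i, a x i i - 2 * α * ∑ i, β x i * (x i - z i)) := by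
  have hc : ContDiff ℝ 2 fun y => -α * sqd z y := contDiff_const.mul (sqd_contDiff z)
  have h1 : ∀ i, pd i (fun y => -α * sqd z y) = fun x => -α * (2 * (x i - z i)) := fun i => by
    rw [pd_const_mul (sqd_contDiff z), pd_sqd]
  have h2 : ∀ i j, pd i (pd j (fun y => -α * sqd z y)) x = -α * (if i = j then 2 else 0) := by
    intro i j
    rw [h1, pd_const_mul (by fun_prop), pd_coord]
  rw [Pop_exp _ _ _ hc]
  congr 1
  simp only [Cs, h2]
  simp only [h1]
  have e1 : ∑ i, ∑ j, a x i j * (-α * (if i = j then 2 else 0) +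
      -α * (2 * (x i - z i)) * (-α * (2 * (x j - z j)))) =
      4 * α ^ 2 * (∑ i, ∑ j, a x i j * (x i - z i) * (x j - z j)) - 2 * α * ∑ i, a x i i := by
    have : ∀ i, a x i i = ∑ j, if i = j then a x i j else 0 := fun i => by simp
    simp only [this]
    simp only [Finset.mul_sum, ← Finset.sum_sub_distrib]
    refine Finset.sum_congr rfl fun i _ => Finset.sum_congr rfl fun j _ => ?_
    split_ifs <;> ring
  have e2 : ∑ i, β x i * (-α * (2 * (x i - z i))) = -(2 * α * ∑ i, β x i * (x i - z i)) := by
    simp only [Finset.mul_sum, ← Finset.sum_neg_distrib]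
    exact Finset.sum_congr rfl fun i _ => by ring
  rw [e1, e2]; ring

lemma Pop_affine_add {f g : (Fin n → ℝ) → ℝ} (hf : ContDiff ℝ 2 f) (hg : ContDiff ℝ 2 g)
    (a : (Fin n → ℝ) → Fin n → Fin n → ℝ) (β : (Fin n → ℝ) → Fin n → ℝ) (ε κ : ℝ)
    (x : Fin n → ℝ) :
    Pop a β (fun _ => 0) (fun y => (κ + ε * g y) + f y) x =
      ε * Pop a β (fun _ => 0) g x + Pop a β (fun _ => 0) f x := by
  have f1 : ContDiff ℝ 1 f := hf.of_le (by norm_num)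
  have g1 : ContDiff ℝ 1 g := hg.of_le (by norm_num)
  have h1 : ∀ i, pd i (fun y => (κ + ε * g y) + f y) = fun x => ε * pd i g x + pd i f x := by
    intro i
    rw [pd_add (contDiff_const.add (contDiff_const.mul g1)) f1,
      pd_add contDiff_const (contDiff_const.mul g1), pd_const_mul g1, pd_const]
    simp
  have h2 : ∀ i j, pd i (pd j (fun y => (κ + ε * g y) + f y)) x =
      ε * pd i (pd j g) x + pd i (pd j f) x := by
    intro i j
    rw [h1, pd_add (contDiff_const.mul (hg.pd_one j)) (hf.pd_one j), pd_const_mul (hg.pd_one j)]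
  simp only [Pop, h2]
  simp only [h1, mul_add, Finset.sum_add_distrib, Finset.mul_sum, neg_add]
  have e1 : ∑ i, ∑ j, a x i j * (ε * pd i (pd j g) x) =
    ε * ∑ i, ∑ j, a x i j * pd i (pd j g) x := by
    simp only [Finset.mul_sum]
    exact Finset.sum_congr rfl fun i _ => Finset.sum_congr rfl fun j _ => by ring
  have e2 : ∑ i, β x i * (ε * pd i g x) = ∑ i, ε * (β x i * pd i g x) :=
    Finset.sum_congr rfl fun i _ => by ring
  rw [e1, e2]; ring
end MaxPrinciple

/-! ### The strong minimum principle -/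

section StrongMax
variable {n : ℕ}

lemma sqd_nonneg (z x : Fin n → ℝ) : 0 ≤ sqd z x := Finset.sum_nonneg fun _ _ => sq_nonneg _

lemma sqd_self (z : Fin n → ℝ) : sqd z z = 0 := by simp [sqd]

lemma eq_of_sqd_le_zero {z x : Fin n → ℝ} (h : sqd z x ≤ 0) : x = z := by
  have h0 := le_antisymm h (sqd_nonneg z x)
  rw [sqd, Finset.sum_eq_zero_iff_of_nonneg fun _ _ => sq_nonneg _] at h0
  funext i
  have := h0 i (Finset.mem_univ i)
  nlinarith [pow_eq_zero_iff (two_ne_zero) |>.mp this]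

/-- A closed set has a point nearest to `z` in the Euclidean sense. -/
lemma exists_nearest {K : Set (Fin n → ℝ)} (hK : IsClosed K) {y₀ : Fin n → ℝ} (hy₀ : y₀ ∈ K)
    (z : Fin n → ℝ) : ∃ y ∈ K, ∀ x ∈ K, sqd z y ≤ sqd z x := by
  have hcomp : IsCompact (K ∩ {x | sqd z x ≤ sqd z y₀}) := by
    refine Metric.isCompact_of_isClosed_isBounded
      (hK.inter (isClosed_le (sqd_contDiff z (m := 0)).continuous continuous_const)) ?_
    refine (Metric.isBounded_closedBall (x := z) (r := Real.sqrt (sqd z y₀))).subset ?_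
    rintro x ⟨-, hx⟩
    rw [Metric.mem_closedBall, dist_pi_le_iff (Real.sqrt_nonneg _)]
    intro i
    rw [Real.dist_eq]
    apply Real.abs_le_sqrt
    refine le_trans ?_ hx
    exact Finset.single_le_sum (f := fun i => (x i - z i) ^ 2) (fun _ _ => sq_nonneg _)
      (Finset.mem_univ i)
  obtain ⟨y, hy, hmin⟩ := hcomp.exists_isMinOn ⟨y₀, hy₀, le_refl (sqd z y₀)⟩
    (sqd_contDiff z (m := 0)).continuous.continuousOn
  refine ⟨y, hy.1, fun x hx => ?_⟩
  by_cases h : sqd z x ≤ sqd z y₀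
  · exact hmin ⟨hx, h⟩
  · exact le_trans hy.2 (not_le.mp h).le

/-- A Euclidean ball touching `K` at exactly one point: halve the ball around a point outside `K`
that reaches the nearest point of `K`. -/
lemma exists_touching_ball {K : Set (Fin n → ℝ)} (hK : IsClosed K) {y₀ : Fin n → ℝ}
    (hy₀ : y₀ ∈ K) {z₀ : Fin n → ℝ} (hz₀ : z₀ ∉ K) :
    ∃ y ∈ K, ∃ z, 0 < sqd z y ∧ ∀ x ∈ K, sqd z x ≤ sqd z y → x = y := by
  obtain ⟨y, hy, hmin⟩ := exists_nearest hK hy₀ z₀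
  have hpos : 0 < sqd z₀ y := by
    by_contra h
    exact hz₀ (eq_of_sqd_le_zero (not_lt.mp h) ▸ hy)
  -- parallelogram identity for the midpoint of `z₀` and `y`
  have hhalf : ∀ x, 4 * sqd (fun i => (z₀ i + y i) / 2) x = 2 * sqd z₀ x + 2 * sqd y x
      - sqd z₀ y := by
    intro x
    simp only [sqd, Finset.mul_sum, ← Finset.sum_add_distrib, ← Finset.sum_sub_distrib]
    exact Finset.sum_congr rfl fun i _ => by ring
  refine ⟨y, hy, fun i => (z₀ i + y i) / 2, ?_, fun x hx hle => ?_⟩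
  · have := hhalf y
    rw [sqd_self] at this
    linarith
  · apply eq_of_sqd_le_zero
    have h1 := hhalf y
    have h2 := hhalf x
    rw [sqd_self] at h1
    have := hmin x hx
    linarith

/-- Strong minimum principle for an elliptic operator without zeroth-order term: a nonnegative `f`
that is a supersolution wherever it is small vanishes identically as soon as it vanishes somewhere.

Near the point `y` where a ball around `z` touches `{f = 0}`, compare `f` with a small multiple of
the Gaussian `g` minus its value at `y`. The difference `F` vanishes at `y`, is nonnegative on a
small sphere around `y`, and satisfies `L F > 0` inside, which excludes an interior minimum. -/
lemma strong_minimum {a : (Fin n → ℝ) → Fin n → Fin n → ℝ} {β : (Fin n → ℝ) → Fin n → ℝ}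
    (hac : ∀ i, Continuous fun x => a x i i) (hβ : ∀ i, Continuous fun x => β x i)
    {a₀ : ℝ} (ha₀ : 0 < a₀)
    (hell : ∀ x ζ : Fin n → ℝ, a₀ * ∑ i, ζ i ^ 2 ≤ ∑ i, ∑ j, a x i j * ζ i * ζ j)
    {f : (Fin n → ℝ) → ℝ} (hf : ContDiff ℝ 2 f) (hf0 : ∀ x, 0 ≤ f x) {δ : ℝ} (hδ : 0 < δ)
    (hL : ∀ x, f x < δ → 0 ≤ Pop a β (fun _ => 0) f x) {y₀ : Fin n → ℝ} (hy₀ : f y₀ = 0)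
    (x : Fin n → ℝ) : f x = 0 := by
  have hfc : Continuous f := hf.continuous
  have hA : ∀ x ζ : Fin n → ℝ, 0 ≤ ∑ i, ∑ j, a x i j * ζ i * ζ j := fun x ζ =>
    le_trans (mul_nonneg ha₀.le (Finset.sum_nonneg fun _ _ => sq_nonneg _)) (hell x ζ)
  by_contra hx
  obtain ⟨y, hy, z, hR, huniq⟩ := exists_touching_ball (K := {x | f x = 0})
    (isClosed_eq hfc continuous_const) hy₀ (z₀ := x) hx
  have hqc : Continuous (sqd z) := (sqd_contDiff z (m := 0)).continuous
  have hnear : ∀ᶠ w in nhds y, f w < δ ∧ sqd z y / 2 < sqd z w := by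
    refine (hfc.continuousAt.eventually_lt continuousAt_const ?_).and
      (continuousAt_const.eventually_lt hqc.continuousAt (by linarith))
    rw [hy]; exact hδ
  obtain ⟨r, hr, hball⟩ := Metric.nhds_basis_closedBall.mem_iff.mp hnear
  have hcB : IsCompact (Metric.closedBall y r) := isCompact_closedBall y r
  have hyB : y ∈ Metric.closedBall y r := Metric.mem_closedBall_self hr.le
  obtain ⟨B, hB⟩ : ∃ B : ℝ, ∀ w ∈ Metric.closedBall y r,
      ∑ i, a w i i - ∑ i, β w i * (w i - z i) ≤ B := by
    have hc : Continuous fun w : Fin n → ℝ => ∑ i, a w i i - ∑ i, β w i * (w i - z i) := by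
      fun_prop
    obtain ⟨B, hB⟩ := (hcB.image hc).bddAbove
    exact ⟨B, fun w hw => hB ⟨w, hw, rfl⟩⟩
  -- the exponent beats the bound `B` on the drift and trace terms
  obtain ⟨α, hα, hαB⟩ : ∃ α : ℝ, 0 < α ∧ B < α * (a₀ * sqd z y) := by
    have hm : 0 < a₀ * sqd z y := mul_pos ha₀ hR
    refine ⟨(|B| + 1) / (a₀ * sqd z y), by positivity, ?_⟩
    rw [div_mul_cancel₀ _ hm.ne']
    linarith [le_abs_self B]
  set g : (Fin n → ℝ) → ℝ := fun w => Real.exp (-α * sqd z w) with hg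
  have hgC : ContDiff ℝ 2 g := (contDiff_const.mul (sqd_contDiff z)).exp
  have hLg : ∀ w ∈ Metric.closedBall y r, Pop a β (fun _ => 0) g w < 0 := by
    intro w hw
    rw [hg, Pop_barrier]
    refine mul_neg_of_pos_of_neg (Real.exp_pos _) ?_
    have h1 := hell w fun i => w i - z i
    have h2 := hB w hw
    have h3 : sqd z y / 2 < sqd z w := (hball hw).2
    change a₀ * sqd z w ≤ _ at h1
    have h4 : a₀ * (sqd z y / 2) < a₀ * sqd z w := mul_lt_mul_of_pos_left h3 ha₀
    have h5 : α * (a₀ * sqd z y / 2) < α * (∑ i, ∑ j, a w i j * (w i - z i) * (w j - z j)) :=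
      mul_lt_mul_of_pos_left (by linarith) hα
    have h6 : 0 < α * (2 * (α * (∑ i, ∑ j, a w i j * (w i - z i) * (w j - z j))) -
      (∑ i, a w i i - ∑ i, β w i * (w i - z i))) := mul_pos hα (by linarith)
    nlinarith [h6]
  obtain ⟨ε, hε, hεf⟩ : ∃ ε : ℝ, 0 < ε ∧
      ∀ w ∈ Metric.sphere y r ∩ {w | sqd z w ≤ sqd z y}, ε ≤ f w := by
    have hcS : IsCompact (Metric.sphere y r ∩ {w | sqd z w ≤ sqd z y}) :=
      (isCompact_sphere y r).inter_right (isClosed_le hqc continuous_const)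
    rcases (Metric.sphere y r ∩ {w | sqd z w ≤ sqd z y}).eq_empty_or_nonempty with he | hne
    · exact ⟨1, one_pos, by rw [he]; simp⟩
    · obtain ⟨w, hw, hmin⟩ := hcS.exists_isMinOn hne hfc.continuousOn
      refine ⟨f w, lt_of_le_of_ne (hf0 w) fun h0 => ?_, fun v hv => hmin hv⟩
      have hwy := huniq w h0.symm hw.2
      have := hw.1
      rw [hwy, Metric.mem_sphere, dist_self] at this
      exact hr.ne this
  set κ : ℝ := ε * Real.exp (-α * sqd z y) with hκ
  set F : (Fin n → ℝ) → ℝ := fun w => (κ + (-ε) * g w) + f w with hF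
  have hFC : ContDiff ℝ 2 F := (contDiff_const.add (contDiff_const.mul hgC)).add hf
  have hFy : F y = 0 := by
    simp only [hF, hκ, hg]; rw [hy]; ring
  have hbdry : ∀ w ∈ Metric.sphere y r, 0 ≤ F w := by
    intro w hw
    by_cases hq : sqd z w ≤ sqd z y
    · have h1 := hεf w ⟨hw, hq⟩
      have h2 : g w ≤ 1 := Real.exp_le_one_iff.mpr (by nlinarith [sqd_nonneg z w])
      have h3 : 0 < κ := mul_pos hε (Real.exp_pos _)
      simp only [hF]
      nlinarith
    · have h2 : g w ≤ Real.exp (-α * sqd z y) :=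
        Real.exp_le_exp.mpr (by nlinarith [not_le.mp hq])
      have := hf0 w
      simp only [hF, hκ]
      nlinarith
  -- the minimum of `F` on the closed ball is attained in its interior
  obtain ⟨w, hw, hwmin⟩ : ∃ w ∈ Metric.ball y r, IsMinOn F (Metric.closedBall y r) w := by
    obtain ⟨w, hw, hmin⟩ := hcB.exists_isMinOn ⟨y, hyB⟩ hFC.continuous.continuousOn
    by_cases hwb : w ∈ Metric.ball y r
    · exact ⟨w, hwb, hmin⟩
    · refine ⟨y, Metric.mem_ball_self hr, fun v hv => ?_⟩
      have hs : w ∈ Metric.sphere y r := by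
        rw [Metric.mem_ball, not_lt] at hwb
        exact le_antisymm hw hwb
      have h1 := hbdry w hs
      have h2 : F w ≤ F v := hmin hv
      change F y ≤ F v
      linarith
  have hloc : IsLocalMin F w :=
    hwmin.isLocalMin (Filter.mem_of_superset (Metric.isOpen_ball.mem_nhds hw)
      Metric.ball_subset_closedBall)
  have hwB := Metric.ball_subset_closedBall hw
  have h1 := Pop_nonpos_of_isLocalMin hFC hloc (hA w) β
  rw [hF, Pop_affine_add hf hgC] at h1
  have h2 := hL w (hball hwB).1
  have h3 := hLg w hwB
  nlinarith
end StrongMax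

/-! ### Bloch solutions and supersolution exponents -/

section Bloch
variable {n : ℕ}

/-- A continuous periodic function attains its maximum, namely on the unit cube. -/
lemma ZPeriodic.exists_max {f : (Fin n → ℝ) → ℝ} (hf : Continuous f) (hper : ZPeriodic f) :
    ∃ x₀, ∀ x, f x ≤ f x₀ := by
  obtain ⟨x₀, -, hmax⟩ := (isCompact_Icc (a := (0 : Fin n → ℝ)) (b := 1)).exists_isMaxOn
    ⟨0, by simp⟩ hf.continuousOn
  refine ⟨x₀, fun x => ?_⟩
  have h1 : (fun i => Int.fract (x i)) ∈ Set.Icc (0 : Fin n → ℝ) 1 :=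
    ⟨fun i => Int.fract_nonneg _, fun i => (Int.fract_lt_one _).le⟩
  have h2 := hper (fun i => Int.fract (x i)) fun i => ⌊x i⌋
  have h3 : ((fun i => Int.fract (x i)) + fun i => ((⌊x i⌋ : ℤ) : ℝ)) = x := by
    funext i; simp
  rw [h3] at h2
  rw [h2]
  exact hmax h1

lemma dotR_contDiff (ξ : Fin n → ℝ) {m : WithTop ℕ∞} : ContDiff ℝ m (dotR ξ) := by
  unfold dotR
  exact ContDiff.sum fun i _ => contDiff_const.mul (contDiff_apply ℝ ℝ i)

lemma dotCR_contDiff (k : Fin n → ℂ) {m : WithTop ℕ∞} : ContDiff ℝ m (dotCR k) := by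
  unfold dotCR
  exact ContDiff.sum fun i _ => contDiff_const.mul
    (Complex.ofRealCLM.contDiff.comp (contDiff_apply ℝ ℝ i))

lemma norm_exp_I_dotCR (k : Fin n → ℂ) (x : Fin n → ℝ) :
    ‖Complex.exp (Complex.I * dotCR k x)‖ = Real.exp (dotR (fun i => -(k i).im) x) := by
  rw [Complex.norm_exp]
  simp [dotCR, dotR]

/-- Since `P` has real coefficients, it commutes with real-linear functionals on `ℂ`. -/
lemma clm_PopC (l : ℂ →L[ℝ] ℝ) (a : (Fin n → ℝ) → Fin n → Fin n → ℝ)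
    (b : (Fin n → ℝ) → Fin n → ℝ) (c : (Fin n → ℝ) → ℝ) {u : (Fin n → ℝ) → ℂ}
    (hu : ContDiff ℝ 2 u) (x : Fin n → ℝ) :
    l (PopC a b c u x) = Pop a b c (fun y => l (u y)) x := by
  have h1 : ∀ i, pd i (fun y => l (u y)) = fun x => l (pd i u x) :=
    fun i => pd_clm l (hu.of_le (by norm_num)) i
  have h2 : ∀ i j, pd i (pd j fun y => l (u y)) x = l (pd i (pd j u) x) := fun i j => by
    rw [h1, pd_clm l (hu.pd_one j)]
  have h3 : ∀ (r : ℝ) (z : ℂ), l ((r : ℂ) * z) = r * l z := fun r z => by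
    rw [← Complex.real_smul, map_smul, smul_eq_mul]
  simp only [PopC, Pop, map_add, map_neg, map_sum, h2, h3]
  simp only [h1]

/-- `η` is the exponent of a positive supersolution of `P` of the form `e^s`, where `s` is
`η · x` up to a periodic function. -/
def IsSuperExponent (a : (Fin n → ℝ) → Fin n → Fin n → ℝ) (b : (Fin n → ℝ) → Fin n → ℝ)
    (c : (Fin n → ℝ) → ℝ) (η : Fin n → ℝ) : Prop :=
  ∃ s : (Fin n → ℝ) → ℝ, ContDiff ℝ 2 s ∧ ZPeriodic (fun x => s x - dotR η x) ∧
    ∀ x, 0 ≤ Cs a b c s x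

lemma isSuperExponent_of_isPrincipalEV {a : (Fin n → ℝ) → Fin n → Fin n → ℝ}
    {b : (Fin n → ℝ) → Fin n → ℝ} {c : (Fin n → ℝ) → ℝ} {ξ : Fin n → ℝ}
    (h : IsPrincipalEV a b c ξ 0) : IsSuperExponent a b c ξ := by
  obtain ⟨q, hq, hpos, hper, heq⟩ := h
  have hs : ContDiff ℝ 2 fun x => dotR ξ x + Real.log (q x) :=
    (dotR_contDiff ξ).add (hq.log fun x => (hpos x).ne')
  refine ⟨_, hs, ?_, fun x => ?_⟩
  · intro x γ
    simp [hper x γ]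
  · have h1 := heq x
    have h2 : (fun y => Real.exp (dotR ξ y) * q y) =
        fun y => Real.exp (dotR ξ y + Real.log (q y)) := by
      funext y; rw [Real.exp_add, Real.exp_log (hpos y)]
    rw [h2, Pop_exp a b c hs, zero_mul] at h1
    exact ((mul_eq_zero.mp h1).resolve_left (Real.exp_pos _).ne').ge

lemma convex_isSuperExponent {a : (Fin n → ℝ) → Fin n → Fin n → ℝ}
    {b : (Fin n → ℝ) → Fin n → ℝ} {c : (Fin n → ℝ) → ℝ}
    (hA : ∀ x ζ : Fin n → ℝ, 0 ≤ ∑ i, ∑ j, a x i j * ζ i * ζ j) :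
    Convex ℝ {η | IsSuperExponent a b c η} := by
  rintro η ⟨s, hs, hsper, hsC⟩ η' ⟨s', hs', hsper', hsC'⟩ t r ht hr htr
  refine ⟨fun x => t * s x + r * s' x, (contDiff_const.mul hs).add (contDiff_const.mul hs'),
    fun x γ => ?_, fun x => ?_⟩
  · have hd : ∀ x, dotR (t • η + r • η') x = t * dotR η x + r * dotR η' x := by
      intro x
      simp only [dotR, Finset.mul_sum, ← Finset.sum_add_distrib]
      exact Finset.sum_congr rfl fun i _ => by simp; ring
    have h1 := hsper x γ
    have h2 := hsper' x γ
    simp only [hd] at h1 h2 ⊢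
    linear_combination t * h1 + r * h2
  · exact le_trans (add_nonneg (mul_nonneg ht (hsC x)) (mul_nonneg hr (hsC' x)))
      (Cs_concave b c hs hs' ht hr htr x (hA x))
end Bloch

/-- If `Λ₀ ≥ 0` and `u = e^{i k·x} p(x)` is a nonzero Bloch solution of
`Pu = 0` with `Im k ∈ -G`, then `u` is a positive Bloch solution up to a nonzero complex
constant. -/
theorem bloch_solution_in_tube_is_positive {n : ℕ}
    (a : (Fin n → ℝ) → Fin n → Fin n → ℝ) (b : (Fin n → ℝ) → Fin n → ℝ)
    (c : (Fin n → ℝ) → ℝ) (hP : IsPeriodicElliptic a b c)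
    (Λ : (Fin n → ℝ) → ℝ) (hΛ : ∀ ξ, IsPrincipalEV a b c ξ (Λ ξ))
    (hΛ0 : ∃ ξ, 0 ≤ Λ ξ)
    (k : Fin n → ℂ)
    (hk : (fun i => -(k i).im) ∈ convexHull ℝ {ξ : Fin n → ℝ | Λ ξ = 0})
    (p : (Fin n → ℝ) → ℂ) (hp : ContDiff ℝ 2 p) (hpper : ZPeriodic p)
    (hpne : ∃ x, p x ≠ 0)
    (hsol : ∀ x, PopC a b c (fun y => Complex.exp (Complex.I * dotCR k y) * p y) x = 0) :
    ∃ c₀ : ℂ, c₀ ≠ 0 ∧ ∀ x : Fin n → ℝ,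
      0 < (c₀ * (Complex.exp (Complex.I * dotCR k x) * p x)).re ∧
      (c₀ * (Complex.exp (Complex.I * dotCR k x) * p x)).im = 0 := by
  obtain ⟨haC, hbC, -, -, -, -, a₀, ha₀, hell⟩ := hP
  have hA : ∀ x ζ : Fin n → ℝ, 0 ≤ ∑ i, ∑ j, a x i j * ζ i * ζ j := fun x ζ =>
    le_trans (mul_nonneg ha₀.le (Finset.sum_nonneg fun _ _ => sq_nonneg _)) (hell x ζ)
  set η : Fin n → ℝ := fun i => -(k i).im with hη
  obtain ⟨s, hs, hsper, hsC⟩ : IsSuperExponent a b c η := by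
    refine convexHull_min ?_ (convex_isSuperExponent hA) hk
    intro ξ hξ
    have := hΛ ξ
    rw [show Λ ξ = 0 from hξ] at this
    exact isSuperExponent_of_isPrincipalEV this
  set u : (Fin n → ℝ) → ℂ := fun x => Complex.exp (Complex.I * dotCR k x) * p x with hu
  have huC : ContDiff ℝ 2 u := (contDiff_const.mul (dotCR_contDiff k)).cexp.mul hp
  -- `|u| e^{-s}` is periodic, hence attains its maximum
  have hN : ∀ x, ‖u x‖ * Real.exp (-s x) = ‖p x‖ * Real.exp (-(s x - dotR η x)) := by
    intro x
    rw [hu, norm_mul, norm_exp_I_dotCR, neg_sub, sub_eq_add_neg, Real.exp_add]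
    ring
  obtain ⟨x₀, hx₀⟩ : ∃ x₀, ∀ x, ‖u x‖ * Real.exp (-s x) ≤ ‖u x₀‖ * Real.exp (-s x₀) := by
    refine ZPeriodic.exists_max ?_ ?_
    · exact huC.continuous.norm.mul (Real.continuous_exp.comp hs.continuous.neg)
    · intro x γ
      have h1 := hsper x γ
      simp only at h1
      simp only [hN]
      rw [hpper x γ, h1]
  set M : ℝ := ‖u x₀‖ * Real.exp (-s x₀) with hM
  have hMpos : 0 < M := by
    obtain ⟨x, hx⟩ := hpne
    have hux : u x ≠ 0 := mul_ne_zero (Complex.exp_ne_zero _) hx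
    exact lt_of_lt_of_le (mul_pos (norm_pos_iff.mpr hux) (Real.exp_pos _)) (hx₀ x)
  have hu0 : u x₀ ≠ 0 := by
    intro h
    simp [hM, h] at hMpos
  have hu0' : ‖u x₀‖ ≠ 0 := norm_ne_zero_iff.mpr hu0
  -- the phase of `u` at the maximum point
  set θ : ℂ := ‖u x₀‖ / u x₀ with hθ
  have hθn : ‖θ‖ = 1 := by
    rw [hθ, norm_div, Complex.norm_real, norm_norm, div_self hu0']
  have hθu : θ * u x₀ = ‖u x₀‖ := div_mul_cancel₀ _ hu0
  set l : ℂ →L[ℝ] ℝ := Complex.reCLM.comp (ContinuousLinearMap.mul ℝ ℂ θ) with hl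
  have hlv : ∀ z, l z = (θ * z).re := fun z => rfl
  set h : (Fin n → ℝ) → ℝ := fun x => l (u x) * Real.exp (-s x) with hh
  have hhC : ContDiff ℝ 2 h := (l.contDiff.comp huC).mul hs.neg.exp
  have hle : ∀ x, h x ≤ M := by
    intro x
    refine le_trans (mul_le_mul_of_nonneg_right ?_ (Real.exp_pos _).le) (hx₀ x)
    rw [hlv]
    refine (Complex.re_le_norm _).trans ?_
    rw [norm_mul, hθn, one_mul]
  have hlu : (fun y => l (u y)) = fun y => h y * Real.exp (s y) := by
    funext y
    rw [hh, mul_assoc, ← Real.exp_add]; simp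
  have hLh : ∀ x, Pop a (drift a b s) (fun _ => 0) h x + h x * Cs a b c s x = 0 := by
    intro x
    have h1 := clm_PopC l a b c huC x
    rw [hsol x, map_zero, hlu, Pop_mul_exp a b c hhC hs] at h1
    exact (mul_eq_zero.mp h1.symm).resolve_left (Real.exp_pos _).ne'
  have hzero : ∀ x, M + (-1) * h x + 0 = 0 := by
    refine strong_minimum (a := a) (β := drift a b s) (f := fun x => M + (-1) * h x + 0)
      (fun i => (haC i i).continuous) ?_ ha₀ hell
      ((contDiff_const.add (contDiff_const.mul hhC)).add contDiff_const)
      (fun x => by linarith [hle x]) hMpos ?_ (y₀ := x₀) ?_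
    · intro i
      unfold drift
      refine (hbC i).continuous.sub (continuous_finsetSum _ fun j _ => ?_)
      exact ((haC i j).continuous.add (haC j i).continuous).mul (hs.pd_one j).continuous
    · intro x hx
      rw [Pop_affine_add contDiff_const hhC]
      have hz : Pop a (drift a b s) (fun _ => 0) (fun _ => (0:ℝ)) x = 0 := by
        simp [Pop, pd_const]
      rw [hz]
      have h1 : 0 < h x := by linarith
      have h2 := mul_nonneg h1.le (hsC x)
      linarith [hLh x]
    · have : h x₀ = M := by
        simp only [hh, hM, hlv, hθu, Complex.ofReal_re]
      linarith
  refine ⟨θ, norm_ne_zero_iff.mp (by rw [hθn]; exact one_ne_zero), fun x => ?_⟩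
  change 0 < (θ * u x).re ∧ (θ * u x).im = 0
  have h1 : (θ * u x).re = M * Real.exp (s x) := by
    have h2 := congrFun hlu x
    rw [← hlv]
    rw [show l (u x) = _ from h2]
    congr 1
    linarith [hzero x]
  have h3 : 0 < (θ * u x).re := by rw [h1]; exact mul_pos hMpos (Real.exp_pos _)
  refine ⟨h3, ?_⟩
  rw [← Complex.abs_re_eq_norm, abs_of_pos h3]
  refine le_antisymm (Complex.re_le_norm _) ?_
  rw [norm_mul, hθn, one_mul, h1]
  have h4 := mul_le_mul_of_nonneg_right (hx₀ x) (Real.exp_pos (s x)).le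
  rwa [mul_assoc, ← Real.exp_add, neg_add_cancel, Real.exp_zero, mul_one] at h4
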